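/- The integer b is odd (in the writing ε = a + b√m of the fundamental unit, the case b even does not occur). -/

import Mathlib

/-!
If `b` is even, put `u = (a - 1) / 2`. Then `u (u + 1) = m (b / 2) ^ 2` with `u`, `u + 1` coprime,
which yields a factorization `m = d e` and a solution of `d x² - e y² = 1`. Consequently `d` has
Jacobi symbol `1` at every prime dividing `e`, and `-e` has Jacobi symbol `1` at every prime
dividing `d`. For the prescribed Legendre symbols and an even number of primes this is only possible
for `d = 1`, and then `(x, y)` is a smaller solution of the Pell equation.
-/

open Finset
open scoped NumberTheorySymbols

theorem exists_eq_mul_pow_of_coprime_of_mul_eq_mul_pow {s t m c k : ℕ} (hk : k ≠ 0)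
    (hm : m ≠ 0) (hst : s.Coprime t) (h : s * t = m * c ^ k) :
    ∃ d e x y, d * e = m ∧ x * y = c ∧ s = d * x ^ k ∧ t = e * y ^ k := by
  obtain ⟨d, e, ⟨u, rfl⟩, ⟨v, rfl⟩, rfl⟩ := exists_dvd_and_dvd_of_dvd_mul (h ▸ dvd_mul_right m _)
  have huv : u * v = c ^ k := Nat.eq_of_mul_eq_mul_left (Nat.pos_of_ne_zero hm) <| by
    rw [← h, mul_mul_mul_comm]
  have hcop : u.Coprime v := hst.of_dvd (dvd_mul_left u d) (dvd_mul_left v e)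
  obtain ⟨x, rfl⟩ := exists_eq_pow_of_mul_eq_pow (Nat.isUnit_iff.mpr hcop) huv
  obtain ⟨y, rfl⟩ := exists_eq_pow_of_mul_eq_pow (Nat.isUnit_iff.mpr hcop.symm)
    ((mul_comm _ _).trans huv)
  rw [← mul_pow] at huv
  exact ⟨d, e, x, y, rfl, Nat.pow_left_injective hk huv, rfl, rfl⟩

theorem exists_mul_sq_eq_mul_sq_add_one_of_pell {m a c : ℕ} (hm : m ≠ 0)
    (h : a ^ 2 = m * (2 * c) ^ 2 + 1) :
    ∃ d e x y, d * e = m ∧ x * y = c ∧ d * x ^ 2 = e * y ^ 2 + 1 ∧ a = 2 * (e * y ^ 2) + 1 := by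
  have ha : Odd a := by
    rw [← Nat.odd_pow_iff two_ne_zero, h]
    exact ⟨2 * (m * c ^ 2), by ring⟩
  obtain ⟨u, rfl⟩ := ha
  have hu : (u + 1) * u = m * c ^ 2 := by linarith
  obtain ⟨d, e, x, y, hde, hxy, hd, he⟩ :=
    exists_eq_mul_pow_of_coprime_of_mul_eq_mul_pow two_ne_zero hm (by simp) hu
  exact ⟨d, e, x, y, hde, hxy, by rw [← hd, ← he], by rw [← he]⟩

theorem exists_ne_one_mul_sq_eq_mul_sq_add_one_of_even {m a b : ℕ} (hm : m ≠ 0) (hb : 0 < b)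
    (hpell : a ^ 2 = m * b ^ 2 + 1)
    (hmin : ∀ a' b' : ℕ, 0 < a' → 0 < b' → a' ^ 2 = m * b' ^ 2 + 1 → a ≤ a') (hbe : Even b) :
    ∃ d e x y, d * e = m ∧ d ≠ 1 ∧ d * x ^ 2 = e * y ^ 2 + 1 := by
  obtain ⟨c, rfl⟩ := hbe.two_dvd
  obtain ⟨d, e, x, y, hde, rfl, hxy, ha⟩ := exists_mul_sq_eq_mul_sq_add_one_of_pell hm hpell
  refine ⟨d, e, x, y, hde, ?_, hxy⟩
  rintro rfl
  rw [one_mul] at hde hxy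
  subst hde
  obtain ⟨hx, hy⟩ : 0 < x ∧ 0 < y := by simpa using hb
  have hax : a ≤ x := hmin x y hx hy hxy
  have hey : 0 < e * y ^ 2 := mul_pos (Nat.pos_of_ne_zero hm) (pow_pos hy 2)
  have hxa : x < a := calc
    x ≤ x ^ 2 := Nat.le_self_pow two_ne_zero x
    _ = e * y ^ 2 + 1 := hxy
    _ < 2 * (e * y ^ 2) + 1 := by omega
    _ = a := ha.symm
  exact hxa.not_ge hax

theorem exists_prod_eq_prod_compl_eq_of_mul_eq_prod {ι : Type*} [Fintype ι] [DecidableEq ι]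
    {l : ι → ℕ} (hl : ∀ i, (l i).Prime) {d e : ℕ} (h : d * e = ∏ i, l i) :
    ∃ S : Finset ι, ∏ i ∈ S, l i = d ∧ ∏ i ∈ Sᶜ, l i = e := by
  obtain ⟨S, T, b, c, hST, hdisj, hbc, rfl, rfl⟩ :=
    mul_eq_mul_prime_prod (fun i _ => (hl i).prime) ((one_mul (∏ i, l i)).symm ▸ h)
  obtain ⟨rfl, rfl⟩ := mul_eq_one.mp hbc.symm
  obtain rfl : Sᶜ = T := (IsCompl.of_eq hdisj.eq_bot hST).compl_eq
  exact ⟨S, (one_mul _).symm, (one_mul _).symm⟩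

theorem jacobiSym_prod_left {ι : Type*} (S : Finset ι) (f : ι → ℤ) (n : ℕ) :
    J(∏ i ∈ S, f i | n) = ∏ i ∈ S, J(f i | n) :=
  map_prod (⟨⟨(J(· | n)), jacobiSym.one_left n⟩, (jacobiSym.mul_left · · n)⟩ : ℤ →* ℤ) f S

theorem jacobiSym_eq_one_of_mul_sq_modEq_one {d x : ℤ} {n : ℕ} (h : d * x ^ 2 ≡ 1 [ZMOD n]) :
    J(d | n) = 1 := by
  have hmul : J(d | n) * J(x | n) ^ 2 = 1 := by
    rw [← jacobiSym.pow_left, ← jacobiSym.mul_left, jacobiSym.mod_left' h, jacobiSym.one_left]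
  rcases jacobiSym.trichotomy x n with hx | hx | hx <;>
    rw [hx] at hmul <;> linarith

theorem jacobiSym_eq_one_of_mul_sq_add_mul_sq_eq_one {d e x y : ℤ} {n : ℕ}
    (h : d * x ^ 2 + e * y ^ 2 = 1) (hn : (n : ℤ) ∣ e) : J(d | n) = 1 := by
  refine jacobiSym_eq_one_of_mul_sq_modEq_one (x := x) (Int.modEq_iff_dvd.mpr ?_)
  rw [← h, add_sub_cancel_left]
  exact hn.mul_right _

/-- The prime families of Deng and Li, with `i₀` and `i₁` the indices of `ℓ₁` and `ℓ₂`. The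
conditions modulo `8` are weakened to conditions modulo `4`, and Legendre symbols are written as
Jacobi symbols, which need no primality instance. -/
structure IsDengLiFamily {ι : Type*} (l : ι → ℕ) (i₀ i₁ : ι) : Prop where
  prime (i : ι) : (l i).Prime
  mod_four_eq_three : l i₀ % 4 = 3
  mod_four_eq_one {i : ι} (hi : i ≠ i₀) : l i % 4 = 1
  jacobiSym_i₀_i₁ : J(l i₀ | l i₁) = -1
  jacobiSym_i₀_left {j : ι} (hj₀ : j ≠ i₀) (hj₁ : j ≠ i₁) : J(l i₀ | l j) = 1
  jacobiSym_of_ne {i j : ι} (hi : i ≠ i₀) (hj : j ≠ i₀) (hij : i ≠ j) : J(l i | l j) = -1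

namespace IsDengLiFamily

variable {ι : Type*} {l : ι → ℕ} {i₀ i₁ : ι}

theorem of_lt [LinearOrder ι] (hprime : ∀ i, (l i).Prime) (h₀ : l i₀ % 4 = 3)
    (hmod : ∀ i, i ≠ i₀ → l i % 4 = 1) (h₀₁ : J(l i₀ | l i₁) = -1)
    (h₀j : ∀ j, j ≠ i₀ → j ≠ i₁ → J(l i₀ | l j) = 1)
    (hlt : ∀ i j, i ≠ i₀ → j ≠ i₀ → i < j → J(l i | l j) = -1) :
    IsDengLiFamily l i₀ i₁ where
  prime := hprime
  mod_four_eq_three := h₀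
  mod_four_eq_one := hmod _
  jacobiSym_i₀_i₁ := h₀₁
  jacobiSym_i₀_left := h₀j _
  jacobiSym_of_ne {i j} hi hj hij := by
    rcases hij.lt_or_gt with h | h
    · exact hlt i j hi hj h
    · have hj_odd : Odd (l j) := Nat.odd_iff.mpr (Nat.odd_of_mod_four_eq_one (hmod j hj))
      rw [jacobiSym.quadratic_reciprocity_one_mod_four (hmod i hi) hj_odd]
      exact hlt j i hj hi h

theorem i₁_ne_i₀ (hl : IsDengLiFamily l i₀ i₁) : i₁ ≠ i₀ := by
  rintro rfl
  have hzero : J(l i₁ | l i₁) = 0 :=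
    jacobiSym.eq_zero_iff.mpr ⟨(hl.prime i₁).ne_zero, by simpa using (hl.prime i₁).ne_one⟩
  have hneg := hl.jacobiSym_i₀_i₁
  omega

theorem odd_i₀ (hl : IsDengLiFamily l i₀ i₁) : Odd (l i₀) :=
  Nat.odd_iff.mpr (Nat.odd_of_mod_four_eq_three hl.mod_four_eq_three)

theorem odd_of_ne (hl : IsDengLiFamily l i₀ i₁) {j : ι} (hj : j ≠ i₀) : Odd (l j) :=
  Nat.odd_iff.mpr (Nat.odd_of_mod_four_eq_one (hl.mod_four_eq_one hj))

theorem jacobiSym_neg_i₀ (hl : IsDengLiFamily l i₀ i₁) (d : ℤ) : J(-d | l i₀) = -J(d | l i₀) := by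
  rw [jacobiSym.neg d hl.odd_i₀,
    ZMod.χ₄_nat_three_mod_four hl.mod_four_eq_three, neg_one_mul]

theorem jacobiSym_neg (hl : IsDengLiFamily l i₀ i₁) (d : ℤ) {j : ι} (hj : j ≠ i₀) :
    J(-d | l j) = J(d | l j) := by
  rw [jacobiSym.neg d (hl.odd_of_ne hj),
    ZMod.χ₄_nat_one_mod_four (hl.mod_four_eq_one hj), one_mul]

theorem jacobiSym_i₀_right (hl : IsDengLiFamily l i₀ i₁) {j : ι} (hj : j ≠ i₀) :
    J(l j | l i₀) = J(l i₀ | l j) :=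
  jacobiSym.quadratic_reciprocity_one_mod_four (hl.mod_four_eq_one hj) hl.odd_i₀

theorem jacobiSym_prod_of_notMem (hl : IsDengLiFamily l i₀ i₁) {S : Finset ι} {j : ι} (hj : j ≠ i₀)
    (hjS : j ∉ S) (h₀ : i₀ ∉ S) : J(∏ i ∈ S, (l i : ℤ) | l j) = (-1) ^ #S := by
  have hfactor : ∀ i ∈ S, J(l i | l j) = -1 := fun i hi =>
    hl.jacobiSym_of_ne (ne_of_mem_of_not_mem hi h₀) hj (ne_of_mem_of_not_mem hi hjS)
  rw [jacobiSym_prod_left, prod_congr rfl hfactor, prod_const]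

theorem jacobiSym_prod_of_mem (hl : IsDengLiFamily l i₀ i₁) {S : Finset ι} {j : ι} (hj : j ≠ i₀)
    (hjS : j ∉ S) (h₀ : i₀ ∈ S) :
    J(∏ i ∈ S, (l i : ℤ) | l j) = -J(l i₀ | l j) * (-1) ^ #S := by
  classical
  rw [← mul_prod_erase S _ h₀, jacobiSym.mul_left,
    hl.jacobiSym_prod_of_notMem hj (fun h => hjS (mem_of_mem_erase h)) (notMem_erase i₀ S),
    ← card_erase_add_one h₀]
  ring

theorem jacobiSym_prod_i₁ (hl : IsDengLiFamily l i₀ i₁) {S : Finset ι} (h₁ : i₁ ∉ S) :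
    J(∏ i ∈ S, (l i : ℤ) | l i₁) = (-1) ^ #S := by
  by_cases h₀ : i₀ ∈ S
  · rw [hl.jacobiSym_prod_of_mem hl.i₁_ne_i₀ h₁ h₀, hl.jacobiSym_i₀_i₁, neg_neg, one_mul]
  · exact hl.jacobiSym_prod_of_notMem hl.i₁_ne_i₀ h₁ h₀

theorem jacobiSym_prod_i₀ [DecidableEq ι] (hl : IsDengLiFamily l i₀ i₁) {S : Finset ι}
    (h₀ : i₀ ∉ S) : J(∏ i ∈ S, (l i : ℤ) | l i₀) = if i₁ ∈ S then -1 else 1 := by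
  have hfactor : ∀ i ∈ S, J(l i | l i₀) = if i₁ = i then -1 else 1 := by
    intro i hi
    have hi₀ : i ≠ i₀ := ne_of_mem_of_not_mem hi h₀
    rw [hl.jacobiSym_i₀_right hi₀]
    split_ifs with h
    · exact h ▸ hl.jacobiSym_i₀_i₁
    · exact hl.jacobiSym_i₀_left hi₀ (Ne.symm h)
  rw [jacobiSym_prod_left, prod_congr rfl hfactor, prod_ite_eq]

theorem even_card (hl : IsDengLiFamily l i₀ i₁) {S : Finset ι} (h₁ : i₁ ∉ S)
    (hS : J(∏ i ∈ S, (l i : ℤ) | l i₁) = 1) : Even #S := by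
  rwa [hl.jacobiSym_prod_i₁ h₁, neg_one_pow_eq_one_iff_even (by decide)] at hS

variable [Fintype ι]

theorem i₁_notMem [DecidableEq ι] (hl : IsDengLiFamily l i₀ i₁) {S : Finset ι}
    (hS : ∀ j ∉ S, J(∏ i ∈ S, (l i : ℤ) | l j) = 1)
    (hSc : ∀ j ∈ S, J(-∏ i ∈ Sᶜ, (l i : ℤ) | l j) = 1) : i₁ ∉ S := by
  intro h₁
  by_cases h₀ : i₀ ∈ S
  · have h := hSc i₀ h₀
    rw [hl.jacobiSym_neg_i₀, hl.jacobiSym_prod_i₀ (by simpa using h₀),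
      if_neg (by simpa using h₁)] at h
    omega
  · have h := hS i₀ h₀
    rw [hl.jacobiSym_prod_i₀ h₀, if_pos h₁] at h
    omega

theorem i₀_notMem (hl : IsDengLiFamily l i₀ i₁) (heven : Even (Fintype.card ι)) {S : Finset ι}
    (h₁ : i₁ ∉ S) (hS : ∀ j ∉ S, J(∏ i ∈ S, (l i : ℤ) | l j) = 1) : i₀ ∉ S := by
  classical
  intro h₀
  have hS_even : Even #S := hl.even_card h₁ (hS i₁ h₁)
  have hSc_eq : Sᶜ = {i₁} := by
    refine eq_singleton_iff_unique_mem.mpr ⟨mem_compl.mpr h₁, fun j hj => ?_⟩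
    rw [mem_compl] at hj
    by_contra hj₁
    have hj₀ : j ≠ i₀ := (ne_of_mem_of_not_mem h₀ hj).symm
    have h := hS j hj
    rw [hl.jacobiSym_prod_of_mem hj₀ hj h₀, hl.jacobiSym_i₀_left hj₀ hj₁, hS_even.neg_one_pow] at h
    omega
  have hcard : #S + 1 = Fintype.card ι := by rw [← card_add_card_compl S, hSc_eq, card_singleton]
  rw [← hcard] at heven
  exact Nat.not_even_iff_odd.mpr hS_even.add_one heven

theorem eq_empty_of_jacobiSym_eq_one [DecidableEq ι] (hl : IsDengLiFamily l i₀ i₁)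
    (heven : Even (Fintype.card ι)) {S : Finset ι} (hS : ∀ j ∉ S, J(∏ i ∈ S, (l i : ℤ) | l j) = 1)
    (hSc : ∀ j ∈ S, J(-∏ i ∈ Sᶜ, (l i : ℤ) | l j) = 1) : S = ∅ := by
  have h₁ : i₁ ∉ S := hl.i₁_notMem hS hSc
  have h₀ : i₀ ∉ S := hl.i₀_notMem heven h₁ hS
  have hSc_even : Even #Sᶜ := by
    rw [← card_add_card_compl S] at heven
    exact (Nat.even_add.mp heven).mp (hl.even_card h₁ (hS i₁ h₁))
  refine eq_empty_of_forall_notMem fun j hj => ?_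
  have hj₀ : j ≠ i₀ := ne_of_mem_of_not_mem hj h₀
  have hj₁ : j ≠ i₁ := ne_of_mem_of_not_mem hj h₁
  have h := hSc j hj
  rw [hl.jacobiSym_neg _ hj₀, hl.jacobiSym_prod_of_mem hj₀ (by simpa using hj) (by simpa using h₀),
    hl.jacobiSym_i₀_left hj₀ hj₁, hSc_even.neg_one_pow] at h
  omega

theorem eq_one_of_mul_sq_eq_mul_sq_add_one (hl : IsDengLiFamily l i₀ i₁)
    (heven : Even (Fintype.card ι)) {d e x y : ℕ} (hde : d * e = ∏ i, l i)
    (hxy : d * x ^ 2 = e * y ^ 2 + 1) : d = 1 := by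
  classical
  obtain ⟨S, rfl, rfl⟩ := exists_prod_eq_prod_compl_eq_of_mul_eq_prod hl.prime hde
  have hsum : (∏ i ∈ S, (l i : ℤ)) * x ^ 2 + -(∏ i ∈ Sᶜ, (l i : ℤ)) * y ^ 2 = 1 := by
    have hxy' : (∏ i ∈ S, (l i : ℤ)) * x ^ 2 = (∏ i ∈ Sᶜ, (l i : ℤ)) * y ^ 2 + 1 := by
      exact_mod_cast hxy
    linear_combination hxy'
  have hS : ∀ j ∉ S, J(∏ i ∈ S, (l i : ℤ) | l j) = 1 := fun j hj =>
    jacobiSym_eq_one_of_mul_sq_add_mul_sq_eq_one hsum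
      (dvd_prod_of_mem (fun i => (l i : ℤ)) (mem_compl.mpr hj)).neg_right
  have hSc : ∀ j ∈ S, J(-∏ i ∈ Sᶜ, (l i : ℤ) | l j) = 1 := fun j hj =>
    jacobiSym_eq_one_of_mul_sq_add_mul_sq_eq_one ((add_comm _ _).trans hsum)
      (dvd_prod_of_mem (fun i => (l i : ℤ)) hj)
  rw [hl.eq_empty_of_jacobiSym_eq_one heven hS hSc, prod_empty]

end IsDengLiFamily

theorem dengLi_b_odd_general {ι : Type*} [Fintype ι] {l : ι → ℕ} {i₀ i₁ : ι}
    (hl : IsDengLiFamily l i₀ i₁) (heven : Even (Fintype.card ι)) {a b : ℕ} (hb : 0 < b)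
    (hpell : a ^ 2 = (∏ i, l i) * b ^ 2 + 1)
    (hmin : ∀ a' b' : ℕ, 0 < a' → 0 < b' → a' ^ 2 = (∏ i, l i) * b' ^ 2 + 1 → a ≤ a') :
    Odd b := by
  by_contra hodd
  have hm : ∏ i, l i ≠ 0 := prod_ne_zero_iff.mpr fun i _ => (hl.prime i).ne_zero
  obtain ⟨d, e, x, y, hde, hd_ne, hxy⟩ :=
    exists_ne_one_mul_sq_eq_mul_sq_add_one_of_even hm hb hpell hmin (Nat.not_odd_iff_even.mp hodd)
  exact hd_ne (hl.eq_one_of_mul_sq_eq_mul_sq_add_one heven hde hxy)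

/-- **Deng–Li family: `b` is odd.** In the writing `ε = a + b√m` of the fundamental unit
(with `(a, b)` the fundamental solution of `a² − m b² = 1`), the case `b` even does not
occur. -/
theorem dengLi_b_odd
    (n : ℕ) (hn : 2 ≤ n) (hneven : Even n)
    (l : Fin n → ℕ) (hlp : ∀ i, (l i).Prime) (hlinj : Function.Injective l)
    (hl1 : l ⟨0, by omega⟩ % 8 = 3)
    (hli : ∀ i : Fin n, i ≠ ⟨0, by omega⟩ → l i % 8 = 5)
    (hleg12 : jacobiSym (l ⟨0, by omega⟩ : ℤ) (l ⟨1, by omega⟩) = -1)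
    (hleg1j : ∀ j : Fin n, 2 ≤ (j : ℕ) → jacobiSym (l ⟨0, by omega⟩ : ℤ) (l j) = 1)
    (hlegij : ∀ i j : Fin n, 1 ≤ (i : ℕ) → i < j → jacobiSym (l i : ℤ) (l j) = -1)
    (m : ℕ) (hm : m = ∏ i, l i)
    (a b : ℕ) (ha : 0 < a) (hb : 0 < b) (hpell : a ^ 2 = m * b ^ 2 + 1)
    (hmin : ∀ a' b' : ℕ, 0 < a' → 0 < b' → a' ^ 2 = m * b' ^ 2 + 1 → a ≤ a') :
    Odd b := by
  subst hm
  have hl : IsDengLiFamily l ⟨0, by omega⟩ ⟨1, by omega⟩ :=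
    .of_lt hlp (by omega) (fun i hi => by have := hli i hi; omega) hleg12
      (fun j hj₀ hj₁ => hleg1j j (by grind)) (fun i j hi _ hij => hlegij i j (by grind) hij)
  exact dengLi_b_odd_general hl (by simpa using hneven) hb hpell hmin
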